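/- arXiv:1604.05943 — 2 statements merged into one kernel-verified Lean document; each statement's English description precedes it below -/
import Mathlib

section
/- Let h = 5 and let s be a finite-order linear automorphism of a 5-dimensional complex vector space W with s ≠ id and s ≠ −id. Write the eigenvalues of s (with multiplicity) as α₁, …, α₅, and suppose they satisfy the integrality condition. Writing αᵢ = e^{2πi aᵢ} with aᵢ ∈ [0,1), the age of the induced automorphism Sym²s of Sym²W satisfies λ_{Sym²W}(s) = Σ_{1≤i≤j≤5} {aᵢ + aⱼ} ≥ 1, where {x} denotes the fractional part of a real number x. -/
open Polynomial

/-- The submodule of `W ⊗ W` generated by `x ⊗ y - y ⊗ x`. -/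
noncomputable def SymKer (R M : Type*) [CommRing R] [AddCommGroup M] [Module R M] :
    Submodule R (TensorProduct R M M) :=
  Submodule.span R {z | ∃ x y : M, z = x ⊗ₜ[R] y - y ⊗ₜ[R] x}

/-- The second symmetric power `Sym²M = (M ⊗ M)/⟨x⊗y - y⊗x⟩`. -/
abbrev SymSq (R M : Type*) [CommRing R] [AddCommGroup M] [Module R M] :=
  TensorProduct R M M ⧸ SymKer R M

/-- The automorphism `Sym²f` of `Sym²M` induced by `f : M → M`. -/
noncomputable def sym2Map {R M : Type*} [CommRing R] [AddCommGroup M] [Module R M]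
    (f : M →ₗ[R] M) : SymSq R M →ₗ[R] SymSq R M :=
  Submodule.mapQ (SymKer R M) (SymKer R M) (TensorProduct.map f f) (by
    rw [SymKer, Submodule.span_le]
    rintro z ⟨x, y, rfl⟩
    simp only [SetLike.mem_coe, Submodule.mem_comap, map_sub, TensorProduct.map_tmul]
    exact Submodule.subset_span ⟨f x, f y, rfl⟩)

/-- The age `λ(f)` of a finite-order endomorphism `f` of a finite-dimensional complex
vector space: writing the eigenvalues (roots of the characteristic polynomial, with
multiplicity) as `e^{2πi aⱼ}` with `aⱼ ∈ [0,1)`, the age is `Σⱼ aⱼ`. -/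
noncomputable def age {T : Type*} [AddCommGroup T] [Module ℂ T] [Module.Finite ℂ T]
    (f : Module.End ℂ T) : ℝ :=
  ((LinearMap.charpoly f).roots.map (fun z => Int.fract (Complex.arg z / (2 * Real.pi)))).sum

open TensorProduct in
lemma symSq_basis_exists {W : Type*} [AddCommGroup W] [Module ℂ W]
    (v : Module.Basis (Fin 5) ℂ W) :
    ∃ b : Module.Basis {p : Fin 5 × Fin 5 // p.1 ≤ p.2} ℂ (SymSq ℂ W),
      ∀ p, b p = (SymKer ℂ W).mkQ (v p.1.1 ⊗ₜ[ℂ] v p.1.2) := by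
  have hcomm : ∀ x y : W, (SymKer ℂ W).mkQ (x ⊗ₜ[ℂ] y) = (SymKer ℂ W).mkQ (y ⊗ₜ[ℂ] x) := by
    intro x y
    rw [← sub_eq_zero, ← map_sub]
    simp only [Submodule.mkQ_apply, Submodule.Quotient.mk_eq_zero]
    exact Submodule.subset_span ⟨x, y, rfl⟩
  -- dual functionals
  let φ₀ : Fin 5 → Fin 5 → (W ⊗[ℂ] W →ₗ[ℂ] ℂ) := fun i j =>
    LinearMap.mul' ℂ ℂ ∘ₗ TensorProduct.map (v.coord i) (v.coord j) +
    LinearMap.mul' ℂ ℂ ∘ₗ TensorProduct.map (v.coord j) (v.coord i)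
  have hφ₀ : ∀ i j x y, φ₀ i j (x ⊗ₜ[ℂ] y) =
      v.repr x i * v.repr y j + v.repr x j * v.repr y i := by
    intro i j x y
    simp [φ₀]
  have hker : ∀ i j, SymKer ℂ W ≤ LinearMap.ker (φ₀ i j) := by
    intro i j
    rw [SymKer, Submodule.span_le]
    rintro z ⟨x, y, rfl⟩
    simp only [SetLike.mem_coe, LinearMap.mem_ker, map_sub, hφ₀]
    ring
  let φ : Fin 5 → Fin 5 → (SymSq ℂ W →ₗ[ℂ] ℂ) := fun i j => (SymKer ℂ W).liftQ (φ₀ i j) (hker i j)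
  have hφ : ∀ i j x y, φ i j ((SymKer ℂ W).mkQ (x ⊗ₜ[ℂ] y)) =
      v.repr x i * v.repr y j + v.repr x j * v.repr y i := by
    intro i j x y
    rw [← hφ₀]; rfl
  let w : {p : Fin 5 × Fin 5 // p.1 ≤ p.2} → SymSq ℂ W :=
    fun p => (SymKer ℂ W).mkQ (v p.1.1 ⊗ₜ[ℂ] v p.1.2)
  have hli : LinearIndependent ℂ w := by
    rw [Fintype.linearIndependent_iff]
    intro g hg p
    have h := congrArg (φ p.1.1 p.1.2) hg
    rw [map_sum, map_zero, Finset.sum_eq_single p] at h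
    · rw [map_smul, hφ] at h
      simp only [Module.Basis.repr_self, Finsupp.single_apply, smul_eq_mul] at h
      rcases mul_eq_zero.1 h with h | h
      · exact h
      · exfalso
        revert h
        by_cases e : p.1.1 = p.1.2
        · simp [e]
        · simp [e, Ne.symm e]
    · rintro ⟨⟨k, l⟩, hkl⟩ - hne
      rw [map_smul, hφ]
      obtain ⟨⟨i, j⟩, hij⟩ := p
      simp only [Module.Basis.repr_self, Finsupp.single_apply, smul_eq_mul]
      simp only [ne_eq, Subtype.mk.injEq, Prod.mk.injEq, not_and] at hne hij hkl ⊢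
      have h1 : ¬ (k = i ∧ l = j) := fun h => hne h.1 h.2
      have h2 : ¬ (k = j ∧ l = i) := by
        rintro ⟨rfl, rfl⟩
        have := le_antisymm hij hkl
        exact hne this.symm this
      by_cases a1 : k = i <;> by_cases a2 : l = j <;> by_cases a3 : k = j <;> by_cases a4 : l = i <;>
        simp_all
    · simp
  have hsp : ⊤ ≤ Submodule.span ℂ (Set.range w) := by
    have h1 : Submodule.map (SymKer ℂ W).mkQ ⊤ = ⊤ := by
      rw [Submodule.map_top, Submodule.range_mkQ]
    rw [← h1, ← (v.tensorProduct v).span_eq, Submodule.map_span, Submodule.span_le]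
    rintro _ ⟨_, ⟨⟨i, j⟩, rfl⟩, rfl⟩
    rw [Module.Basis.tensorProduct_apply]
    rcases le_total i j with h | h
    · exact Submodule.subset_span ⟨⟨(i, j), h⟩, rfl⟩
    · rw [hcomm]
      exact Submodule.subset_span ⟨⟨(j, i), h⟩, rfl⟩
  exact ⟨Module.Basis.mk hli hsp, fun p => by rw [Module.Basis.mk_apply]⟩

lemma charpoly_of_eigenbasis {ι V : Type*} [Fintype ι] [DecidableEq ι] [AddCommGroup V] [Module ℂ V]
    [Module.Finite ℂ V]
    (b : Module.Basis ι ℂ V) (f : Module.End ℂ V) (μ : ι → ℂ) (h : ∀ i, f (b i) = μ i • b i) :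
    f.charpoly = ∏ i, (X - C (μ i)) := by
  rw [← LinearMap.charpoly_toMatrix f b, ← Matrix.charpoly_diagonal]
  congr 1
  ext i j
  rw [LinearMap.toMatrix_apply, h, map_smul, Module.Basis.repr_self, Matrix.diagonal_apply,
    Finsupp.smul_apply, Finsupp.single_apply]
  by_cases e : i = j
  · subst e; simp
  · simp [e, Ne.symm e]

lemma fract_arg_exp (x : ℝ) :
    Int.fract (Complex.arg (Complex.exp (2 * Real.pi * Complex.I * x)) / (2 * Real.pi)) =
      Int.fract x := by
  have hp : (2 * Real.pi) ≠ 0 := by positivity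
  have e : (2 * Real.pi * Complex.I * x : ℂ) = ((2 * Real.pi * x : ℝ) : ℂ) * Complex.I := by
    push_cast; ring
  rw [e, Complex.arg_exp_mul_I, toIocMod, sub_div, zsmul_eq_mul, mul_div_cancel_right₀ _ hp,
    Int.fract_sub_intCast, mul_div_cancel_left₀ _ hp]

lemma exists_eigenbasis {W : Type*} [AddCommGroup W] [Module ℂ W] [FiniteDimensional ℂ W]
    (hW : Module.finrank ℂ W = 5)
    (s : Module.End ℂ W) (n : ℕ) (hn : 0 < n) (hord : s ^ n = 1) (α : Fin 5 → ℂ)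
    (heig : LinearMap.charpoly s = ∏ i, (X - C (α i))) :
    ∃ v : Module.Basis (Fin 5) ℂ W, ∀ i, s (v i) = α i • v i := by
  have hss : s.IsSemisimple := by
    apply Module.End.isSemisimple_of_squarefree_aeval_eq_zero (p := X ^ n - C 1)
    · exact (separable_X_pow_sub_C (1 : ℂ) (by exact_mod_cast hn.ne') one_ne_zero).squarefree
    · simp [hord]
  classical
  have hI := DirectSum.isInternal_submodule_of_iSupIndep_of_iSup_eq_top
    (Module.End.eigenspaces_iSupIndep s) hss.iSup_eigenspace_eq_top
  let b := hI.collectedBasis (fun μ => Module.finBasis ℂ (s.eigenspace μ))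
  have hb : ∀ i, s (b i) = i.1 • b i := fun i =>
    Module.End.mem_eigenspace_iff.mp (hI.collectedBasis_mem _ i)
  have : Fintype (Σ μ : ℂ, Fin (Module.finrank ℂ (s.eigenspace μ))) :=
    FiniteDimensional.fintypeBasisIndex b
  let e := Fintype.equivFinOfCardEq ((Module.finrank_eq_card_basis b).symm.trans hW)
  let c := b.reindex e
  let ν : Fin 5 → ℂ := fun i => (e.symm i).1
  have hc : ∀ i, s (c i) = ν i • c i := fun i => by
    simp only [c, ν, Module.Basis.reindex_apply]; exact hb _
  have hcp := charpoly_of_eigenbasis c s ν hc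
  rw [heig] at hcp
  have hroots := congrArg Polynomial.roots hcp
  have hr : ∀ f : Fin 5 → ℂ, (∏ i, (X - C (f i))).roots = Finset.univ.val.map f := by
    intro f
    rw [← Polynomial.roots_multiset_prod_X_sub_C (Finset.univ.val.map f), Multiset.map_map]
    rfl
  rw [hr, hr] at hroots
  obtain ⟨σ, hσ⟩ : ∃ σ : Equiv.Perm (Fin 5), α = ν ∘ σ := by
    have hcard : ∀ z, Nonempty ({i // α i = z} ≃ {i // ν i = z}) := by
      intro z
      have h := congrArg (Multiset.count z) hroots
      rw [Multiset.count_map, Multiset.count_map] at h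
      refine ⟨Fintype.equivOfCardEq ?_⟩
      rw [Fintype.card_subtype, Fintype.card_subtype]
      simp only [eq_comm (a := z)] at h
      exact h
    refine ⟨Equiv.ofFiberEquiv fun z => (hcard z).some, ?_⟩
    funext i
    exact (Equiv.ofFiberEquiv_map (fun z => (hcard z).some) i).symm
  refine ⟨c.reindex σ.symm, fun i => ?_⟩
  rw [Module.Basis.reindex_apply, hc, hσ]
  simp

lemma cos_add_ge {x y : ℝ} (hx : 0 ≤ x) (hy : 0 ≤ y) (hxy : x + y ≤ Real.pi / 2) :
    Real.cos (x + y) + 1 ≤ Real.cos x + Real.cos y := by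
  have key : ∀ z, 0 ≤ z → z ≤ Real.pi / 2 → 1 - Real.cos z ≤ Real.sin z := by
    intro z h0 h1
    have hs := Real.sin_nonneg_of_nonneg_of_le_pi h0 (by linarith [Real.pi_pos])
    have hc := Real.cos_nonneg_of_neg_pi_div_two_le_of_le (x := z) (by linarith [Real.pi_pos]) h1
    nlinarith [Real.sin_sq_add_cos_sq z]
  have h1 := key x hx (by linarith)
  have h2 := key y hy (by linarith)
  have := mul_le_mul h1 h2 (by linarith [Real.cos_le_one y]) (by linarith [Real.cos_le_one x])
  rw [Real.cos_add]
  linarith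

lemma trace_int (a : Fin 5 → ℝ) 
    (hint : ∃ q : Polynomial ℤ, q.map (Int.castRingHom ℂ) =
      ∏ i, (X - C (Complex.exp (2 * Real.pi * Complex.I * (a i)))) *
        (X - C (starRingEnd ℂ (Complex.exp (2 * Real.pi * Complex.I * (a i)))))) :
    ∃ m : ℤ, 2 * ∑ i, Real.cos (2 * Real.pi * a i) = m := by
  obtain ⟨q, hq⟩ := hint
  rw [Finset.prod_mul_distrib] at hq
  have h := congrArg Polynomial.nextCoeff hq
  rw [Polynomial.nextCoeff_map (Int.cast_injective (α := ℂ)), Polynomial.Monic.nextCoeff_mul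
    (monic_prod_of_monic _ _ fun i _ => monic_X_sub_C _) 
    (monic_prod_of_monic _ _ fun i _ => monic_X_sub_C _),
    prod_X_sub_C_nextCoeff, prod_X_sub_C_nextCoeff] at h
  refine ⟨-q.nextCoeff, ?_⟩
  have h' := congrArg Complex.re h
  have e : ∀ i, (Complex.exp (2 * Real.pi * Complex.I * (a i))).re = Real.cos (2 * Real.pi * a i) := by
    intro i
    rw [show (2 * Real.pi * Complex.I * (a i) : ℂ) = ((2 * Real.pi * a i : ℝ) : ℂ) * Complex.I by
      push_cast; ring, Complex.exp_ofReal_mul_I_re]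
  simp only [eq_intCast, Complex.intCast_re, Complex.add_re, Complex.neg_re, Complex.re_sum,
    Complex.conj_re, e] at h'
  push_cast
  linarith

lemma all_zero (t : Fin 5 → ℝ) (ht : ∀ i, 0 ≤ t i) (hsum : ∑ i, t i < 1 / 6)
    (hm : ∃ m : ℤ, 2 * ∑ i, Real.cos (2 * Real.pi * t i) = m) : ∀ i, t i = 0 := by
  obtain ⟨m, hm⟩ := hm
  have hpi := Real.pi_pos
  have hx : ∀ i, 0 ≤ 2 * Real.pi * t i := fun i => by have := ht i; positivity
  have hxs : ∑ i, 2 * Real.pi * t i < Real.pi / 3 := by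
    rw [← Finset.mul_sum]; nlinarith
  have hle : ∀ i, Real.cos (2 * Real.pi * t i) ≤ 1 := fun i => Real.cos_le_one _
  set x : Fin 5 → ℝ := fun i => 2 * Real.pi * t i with hxdef
  have hx : ∀ i, 0 ≤ x i := hx
  have hle : ∀ i, Real.cos (x i) ≤ 1 := hle
  have hm : 2 * ∑ i, Real.cos (x i) = m := hm
  have hxs : ∑ i, x i < Real.pi / 3 := hxs
  rw [Fin.sum_univ_five] at hm hxs
  have p0 := hx 0
  have p1 := hx 1
  have p2 := hx 2
  have p3 := hx 3
  have p4 := hx 4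
  have c1 := cos_add_ge p0 p1 (by linarith)
  have c2 := cos_add_ge (add_nonneg p0 p1) p2 (by linarith)
  have c3 := cos_add_ge (add_nonneg (add_nonneg p0 p1) p2) p3 (by linarith)
  have c4 := cos_add_ge (add_nonneg (add_nonneg (add_nonneg p0 p1) p2) p3) p4 (by linarith)
  have c5 := Real.cos_lt_cos_of_nonneg_of_le_pi (x := x 0 + x 1 + x 2 + x 3 + x 4) (y := Real.pi / 3)
    (by linarith) (by linarith) hxs
  rw [Real.cos_pi_div_three] at c5
  have hm9 : (9 : ℝ) < m := by linarith
  have hm10 : (10 : ℤ) ≤ m := by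
    have : (9 : ℤ) < m := by exact_mod_cast hm9
    omega
  have hm10' : (10 : ℝ) ≤ m := by exact_mod_cast hm10
  have l0 := hle 0
  have l1 := hle 1
  have l2 := hle 2
  have l3 := hle 3
  have l4 := hle 4
  intro i
  have hc : Real.cos (x i) = 1 := by
    fin_cases i <;> simp <;> linarith
  have hxi : x i < 2 * Real.pi := by
    fin_cases i <;> simp <;> linarith
  have := (Real.cos_eq_one_iff_of_lt_of_lt (by linarith [hx i]) hxi).1 hc
  simpa [hxdef, hpi.ne'] using this

lemma sum_pairs (f : Fin 5 → Fin 5 → ℝ) :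
    ∑ p ∈ Finset.univ.filter (fun p : Fin 5 × Fin 5 => p.1 ≤ p.2), f p.1 p.2 =
      f 0 0 + f 0 1 + f 0 2 + f 0 3 + f 0 4 + f 1 1 + f 1 2 + f 1 3 + f 1 4 +
      f 2 2 + f 2 3 + f 2 4 + f 3 3 + f 3 4 + f 4 4 := by
  rw [Finset.sum_filter, Fintype.sum_prod_type]
  simp only [Fin.sum_univ_five]
  simp [Fin.le_def]
  ring


lemma fract_pair {t u e f : ℝ} (ht : 0 ≤ t) (hu : 0 ≤ u) (htu : t + u < 1 / 2)
    (he : e = 0 ∨ e = 1 / 2) (hf : f = 0 ∨ f = 1 / 2) :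
    Int.fract (t + e + (u + f)) = t + u + |e - f| := by
  rw [Int.fract_eq_iff]
  rcases he with rfl | rfl <;> rcases hf with rfl | rfl
  · refine ⟨by simp; linarith, by simp; linarith, 0, by simp⟩
  · refine ⟨by positivity, by norm_num [abs_of_nonneg]; linarith, 0, ?_⟩
    norm_num [abs_of_nonneg]; ring
  · refine ⟨by positivity, by norm_num [abs_of_nonneg]; linarith, 0, ?_⟩
    norm_num [abs_of_nonneg]; ring
  · refine ⟨by simp; linarith, by simp; linarith, 1, by simp; ring⟩

lemma comb (a : Fin 5 → ℝ) (ha : ∀ i, a i ∈ Set.Ico (0 : ℝ) 1)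
    (hS : ∑ p ∈ Finset.univ.filter (fun p : Fin 5 × Fin 5 => p.1 ≤ p.2),
        Int.fract (a p.1 + a p.2) < 1) :
    ∃ t : Fin 5 → ℝ, (∀ i, 0 ≤ t i) ∧ ∑ i, t i < 1 / 6 ∧
      ((∀ i, a i = t i) ∨ (∀ i, a i = t i + 1 / 2)) := by
  have hex : ∀ i, ∃ t e : ℝ, 0 ≤ t ∧ t < 1 / 2 ∧ (e = 0 ∨ e = 1 / 2) ∧ a i = t + e := by
    intro i
    obtain ⟨h0, h1⟩ := ha i
    by_cases h : a i < 1 / 2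
    · exact ⟨a i, 0, h0, h, Or.inl rfl, by ring⟩
    · exact ⟨a i - 1 / 2, 1 / 2, by linarith, by linarith, Or.inr rfl, by ring⟩
  choose t e ht0 ht1 he hae using hex
  have hdiag : ∀ i, Int.fract (a i + a i) = 2 * t i := by
    intro i
    rw [hae i, Int.fract_eq_iff]
    have := ht0 i
    have := ht1 i
    refine ⟨by linarith, by linarith, ?_⟩
    rcases he i with h | h
    · exact ⟨0, by rw [h]; push_cast; ring⟩
    · exact ⟨1, by rw [h]; push_cast; ring⟩
  rw [sum_pairs (fun i j => Int.fract (a i + a j))] at hS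
  simp only [hdiag] at hS
  have hnn : ∀ i j, 0 ≤ Int.fract (a i + a j) := fun i j => Int.fract_nonneg _
  have hd : t 0 + t 1 + t 2 + t 3 + t 4 < 1 / 2 := by
    linarith [hnn 0 1, hnn 0 2, hnn 0 3, hnn 0 4, hnn 1 2, hnn 1 3, hnn 1 4, hnn 2 3, hnn 2 4,
      hnn 3 4]
  have q0 := ht0 0
  have q1 := ht0 1
  have q2 := ht0 2
  have q3 := ht0 3
  have q4 := ht0 4
  have hp : ∀ i j, t i + t j < 1 / 2 → Int.fract (a i + a j) = t i + t j + |e i - e j| := by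
    intro i j hij
    rw [hae i, hae j]
    exact fract_pair (ht0 i) (ht0 j) hij (he i) (he j)
  rw [hp 0 1 (by linarith), hp 0 2 (by linarith), hp 0 3 (by linarith), hp 0 4 (by linarith),
    hp 1 2 (by linarith), hp 1 3 (by linarith), hp 1 4 (by linarith), hp 2 3 (by linarith),
    hp 2 4 (by linarith), hp 3 4 (by linarith)] at hS
  have hab : ∀ i j, 0 ≤ |e i - e j| := fun i j => abs_nonneg _
  have hsum : ∑ i, t i < 1 / 6 := by
    rw [Fin.sum_univ_five]
    linarith [hab 0 1, hab 0 2, hab 0 3, hab 0 4, hab 1 2, hab 1 3, hab 1 4, hab 2 3, hab 2 4,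
      hab 3 4]
  -- all the signs agree with the one at index `0`
  have hsame : ∀ j, e j = e 0 := by
    have tri : ∀ i j k, |e i - e j| ≤ |e i - e k| + |e j - e k| := fun i j k => by
      rw [abs_sub_comm (e j)]; exact abs_sub_le _ _ _
    have h1 : ∀ j, e j ≠ e 0 → |e 0 - e j| = 1 / 2 := by
      intro j hj
      rcases he 0 with h | h <;> rcases he j with h' | h' <;> rw [h, h'] at hj ⊢
      · exact absurd rfl hj
      · norm_num [abs_of_nonneg]
      · norm_num [abs_of_nonneg]
      · exact absurd rfl hj
    intro j
    by_contra hj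
    have hj' := h1 j hj
    fin_cases j <;> simp at hj hj'
    · linarith [tri 0 1 2, tri 0 1 3, tri 0 1 4, hab 2 3, hab 2 4, hab 3 4]
    · have := tri 0 2 1
      rw [abs_sub_comm (e 2) (e 1)] at this
      linarith [tri 0 2 3, tri 0 2 4, hab 1 3, hab 1 4, hab 3 4]
    · have := tri 0 3 1
      have := tri 0 3 2
      rw [abs_sub_comm (e 3) (e 1)] at *
      rw [abs_sub_comm (e 3) (e 2)] at *
      linarith [tri 0 3 4, hab 1 2, hab 1 4, hab 2 4]
    · have := tri 0 4 1
      have := tri 0 4 2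
      have := tri 0 4 3
      rw [abs_sub_comm (e 4) (e 1)] at *
      rw [abs_sub_comm (e 4) (e 2)] at *
      rw [abs_sub_comm (e 4) (e 3)] at *
      linarith [hab 1 2, hab 1 3, hab 2 3]
  refine ⟨t, ht0, hsum, ?_⟩
  rcases he 0 with h | h
  · left; intro i; rw [hae i, hsame i, h, add_zero]
  · right; intro i; rw [hae i, hsame i, h]

lemma age_sym2_eq {W : Type*} [AddCommGroup W] [Module ℂ W] [FiniteDimensional ℂ W]
    (s : Module.End ℂ W) (a : Fin 5 → ℝ) (v : Module.Basis (Fin 5) ℂ W)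
    (hv : ∀ i, s (v i) = Complex.exp (2 * Real.pi * Complex.I * (a i)) • v i) :
    age (sym2Map s) =
      ∑ p ∈ Finset.univ.filter (fun p : Fin 5 × Fin 5 => p.1 ≤ p.2),
        Int.fract (a p.1 + a p.2) := by
  obtain ⟨b, hb⟩ := symSq_basis_exists v
  have hcp := charpoly_of_eigenbasis b (sym2Map s)
    (fun p => Complex.exp (2 * Real.pi * Complex.I * ((a p.1.1 + a p.1.2 : ℝ) : ℂ))) (by
      intro p
      rw [hb]
      change (SymKer ℂ W).mkQ (TensorProduct.map s s (v p.1.1 ⊗ₜ[ℂ] v p.1.2)) = _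
      rw [TensorProduct.map_tmul, hv, hv, TensorProduct.smul_tmul_smul, map_smul, ← Complex.exp_add]
      congr 2
      push_cast; ring)
  have hr : ∀ f : {p : Fin 5 × Fin 5 // p.1 ≤ p.2} → ℂ,
      (∏ i, (X - C (f i))).roots = Finset.univ.val.map f := by
    intro f
    rw [← Polynomial.roots_multiset_prod_X_sub_C (Finset.univ.val.map f), Multiset.map_map]
    rfl
  rw [age, hcp, hr, Multiset.map_map]
  simp only [Function.comp_def, fract_arg_exp]
  rw [Finset.sum_subtype (p := fun p : Fin 5 × Fin 5 => p.1 ≤ p.2) _ (by simp)]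
  rfl

/-- Let `s` be a finite-order automorphism of a `5`-dimensional complex vector space `W`,
with `s ≠ ±1`, whose eigenvalues `αᵢ = e^{2πi aᵢ}` (with `aᵢ ∈ [0,1)`) satisfy the
integrality condition that `∏ᵢ (X - αᵢ)(X - α̅ᵢ)` has integer coefficients.  Then the age
of the induced automorphism `Sym²s` of `Sym²W` satisfies
`λ_{Sym²W}(s) = Σ_{i ≤ j} {aᵢ + aⱼ} ≥ 1`. -/
theorem age_sym2_ge_one_of_dim_five
    (W : Type*) [AddCommGroup W] [Module ℂ W] [FiniteDimensional ℂ W]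
    (hW : Module.finrank ℂ W = 5)
    (s : Module.End ℂ W) (n : ℕ) (hn : 0 < n) (hord : s ^ n = 1)
    (hs1 : s ≠ 1) (hs2 : s ≠ -1)
    (a : Fin 5 → ℝ) (ha : ∀ i, a i ∈ Set.Ico (0 : ℝ) 1)
    (heig : LinearMap.charpoly s =
      ∏ i, (X - C (Complex.exp (2 * Real.pi * Complex.I * (a i)))))
    (hint : ∃ q : Polynomial ℤ, q.map (Int.castRingHom ℂ) =
      ∏ i, (X - C (Complex.exp (2 * Real.pi * Complex.I * (a i)))) *
        (X - C (starRingEnd ℂ (Complex.exp (2 * Real.pi * Complex.I * (a i)))))) :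
    age (sym2Map s) =
      ∑ p ∈ Finset.univ.filter (fun p : Fin 5 × Fin 5 => p.1 ≤ p.2),
        Int.fract (a p.1 + a p.2) ∧
    1 ≤ ∑ p ∈ Finset.univ.filter (fun p : Fin 5 × Fin 5 => p.1 ≤ p.2),
        Int.fract (a p.1 + a p.2) := by
  obtain ⟨v, hv⟩ := exists_eigenbasis hW s n hn hord _ heig
  refine ⟨age_sym2_eq s a v hv, ?_⟩
  by_contra hlt
  rw [not_le] at hlt
  obtain ⟨t, ht0, hts, h | h⟩ := comb a ha hlt
  · have hz := all_zero t ht0 hts (by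
      simpa only [h] using trace_int a hint)
    apply hs1
    apply v.ext
    intro i
    rw [hv, h i, hz i]
    simp
  · have hz := all_zero t ht0 hts (by
      obtain ⟨m, hm⟩ := trace_int a hint
      refine ⟨-m, ?_⟩
      have hc : ∀ i, Real.cos (2 * Real.pi * a i) = -Real.cos (2 * Real.pi * t i) := by
        intro i
        rw [h i, show 2 * Real.pi * (t i + 1 / 2) = 2 * Real.pi * t i + Real.pi by ring,
          Real.cos_add_pi]
      simp only [hc, Finset.sum_neg_distrib] at hm
      push_cast
      linarith)
    apply hs2
    apply v.ext
    intro i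
    rw [hv, h i, hz i, show (2 * Real.pi * Complex.I * ((0 + 1 / 2 : ℝ) : ℂ)) = Real.pi * Complex.I by
      push_cast; ring, Complex.exp_pi_mul_I]
    simp
end

section
/- Let h ≥ 1, r ≥ 0 with g = h + r ≥ 5. Let A be a finite-order linear automorphism of an h-dimensional complex vector space W whose eigenvalues α₁, …, α_h satisfy the integrality condition, and let B be a finite-order matrix in GL(r, ℤ) with (complex) eigenvalues β₁, …, β_r. Let s denote the induced automorphism of V = Sym²W ⊕ (W ⊗ ℂʳ) acting as Sym²A on the first summand and as A ⊗ B on the second. If s does not have order 1 or 2 (i.e. s² ≠ id_V), then λ_V(s) ≥ 1, where, writing αᵢ = e^{2πi aᵢ} and β_k = e^{2πi b_k} with aᵢ, b_k ∈ [0,1), λ_V(s) = Σ_{1≤i≤j≤h} {aᵢ + aⱼ} + Σ_{1≤i≤h, 1≤k≤r} {aᵢ + b_k} and {x} denotes the fractional part of x. -/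
open Polynomial

/-- The exponential `e^{2πi x}`. -/
noncomputable abbrev ee (x : ℝ) : ℂ := Complex.exp (2 * Real.pi * Complex.I * x)

theorem ee_eq_iff {x y : ℝ} : ee x = ee y ↔ ∃ n : ℤ, x = y + n := by
  have hpi : (2 * (Real.pi : ℂ) * Complex.I) ≠ 0 := Complex.two_pi_I_ne_zero
  rw [ee, ee, Complex.exp_eq_exp_iff_exists_int]
  constructor
  · rintro ⟨n, hn⟩
    refine ⟨n, ?_⟩
    have : (2 * (Real.pi : ℂ) * Complex.I) * x = (2 * (Real.pi : ℂ) * Complex.I) * (y + n) := by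
      rw [hn]; ring
    exact_mod_cast mul_left_cancel₀ hpi this
  · rintro ⟨n, rfl⟩
    refine ⟨n, ?_⟩
    push_cast
    ring

theorem ee_inj {x y : ℝ} (hx : x ∈ Set.Ico (0 : ℝ) 1) (hy : y ∈ Set.Ico (0 : ℝ) 1)
    (h : ee x = ee y) : x = y := by
  obtain ⟨n, hn⟩ := ee_eq_iff.1 h
  have h1 : (n : ℝ) < 1 := by linarith [hx.2, hy.1]
  have h2 : (-1 : ℝ) < n := by linarith [hx.1, hy.2]
  have h3 : n < 1 := by exact_mod_cast h1
  have h4 : -1 < n := by exact_mod_cast h2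
  have : n = 0 := by omega
  subst this
  simpa using hn

theorem ee_conj (x : ℝ) : starRingEnd ℂ (ee x) = ee (-x) := by
  rw [ee, ee, ← Complex.exp_conj]
  congr 1
  simp only [map_mul, Complex.conj_ofReal, Complex.conj_I, Complex.ofReal_neg, Complex.conj_ofNat]
  ring

theorem ee_sq (x : ℝ) : ee x ^ 2 = ee (2 * x) := by
  rw [ee, ee, ← Complex.exp_nat_mul]
  congr 1
  push_cast
  ring

theorem ee_zero : ee 0 = 1 := by simp [ee]

/-- The factor extraction function. -/
theorem ee_fract (a x : ℝ) :
    Int.fract (a + Complex.arg (ee x) / (2 * Real.pi)) = Int.fract (a + x) := by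
  have h1 : ee (Complex.arg (ee x) / (2 * Real.pi)) = ee x := by
    have hn : ‖ee x‖ = 1 := by
      rw [ee, Complex.norm_exp]
      simp
    have := Complex.norm_mul_exp_arg_mul_I (ee x)
    rw [hn] at this
    conv_rhs => rw [← this]
    rw [ee]
    have hpi : (Real.pi : ℂ) ≠ 0 := by exact_mod_cast Real.pi_ne_zero
    simp only [Complex.ofReal_one, one_mul]
    congr 1
    push_cast
    field_simp
  obtain ⟨n, hn⟩ := ee_eq_iff.1 h1
  rw [hn, ← add_assoc, Int.fract_add_intCast]

theorem prod_symm {r : ℕ} (P : Polynomial ℤ) (b : Fin r → ℝ)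
    (hP : P.map (Int.castRingHom ℂ) = ∏ k, (X - C (ee (b k)))) :
    ∏ k, (X - C (ee (b k))) = ∏ k, (X - C (ee (-(b k)))) := by
  rw [← hP]
  have := congrArg (Polynomial.map (starRingEnd ℂ)) hP
  rw [Polynomial.map_map, Polynomial.map_prod] at this
  have h2 : (starRingEnd ℂ).comp (Int.castRingHom ℂ) = Int.castRingHom ℂ :=
    RingHom.ext_int _ _
  rw [h2] at this
  rw [this]
  refine Finset.prod_congr rfl fun k _ => ?_
  rw [Polynomial.map_sub, Polynomial.map_X, Polynomial.map_C, ee_conj]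

/-- Sums over the eigenvalue exponents of an integral matrix are symmetric. -/
theorem sum_fract_symm {r : ℕ} (P : Polynomial ℤ) (b : Fin r → ℝ)
    (hP : P.map (Int.castRingHom ℂ) = ∏ k, (X - C (ee (b k)))) (a : ℝ) :
    ∑ k, Int.fract (a + b k) = ∑ k, Int.fract (a - b k) := by
  have h1 := prod_symm P b hP
  have h2 : ∀ c : Fin r → ℂ, (∏ k, (X - C (c k))).roots = Finset.univ.val.map c := by
    intro c
    have : ∏ k, (X - C (c k)) = ((Finset.univ.val.map c).map fun z => X - C z).prod := by
      rw [Multiset.map_map]; rfl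
    rw [this, Polynomial.roots_multiset_prod_X_sub_C]
  have h3 := congrArg Polynomial.roots h1
  rw [h2, h2] at h3
  have h4 := congrArg (fun s : Multiset ℂ =>
    (s.map fun z => Int.fract (a + Complex.arg z / (2 * Real.pi))).sum) h3
  simp only [Multiset.map_map, Function.comp_def, ee_fract] at h4
  simp only [sub_eq_add_neg]
  exact h4

/-- A finite order endomorphism with all eigenvalues `±1` squares to one. -/
theorem end_sq_eq_one {V : Type*} [AddCommGroup V] [Module ℂ V] [FiniteDimensional ℂ V]
    (f : Module.End ℂ V) (n : ℕ) (hn : 0 < n) (hf : f ^ n = 1) {d : ℕ} (c : Fin d → ℂ)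
    (hc : LinearMap.charpoly f = ∏ i, (X - C (c i))) (h2 : ∀ i, c i ^ 2 = 1) : f ^ 2 = 1 := by
  have hsq : Squarefree (minpoly ℂ f) := by
    have h1 : (X ^ n - C (1 : ℂ)).Separable :=
      Polynomial.separable_X_pow_sub_C 1 (by exact_mod_cast hn.ne') one_ne_zero
    refine h1.squarefree.squarefree_of_dvd (minpoly.dvd ℂ f ?_)
    simp [hf]
  have hdvd : minpoly ℂ f ∣ (X ^ 2 - C (1 : ℂ)) ^ (d + 1) := by
    refine (LinearMap.minpoly_dvd_charpoly f).trans ?_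
    rw [hc]
    have : ∏ i, (X - C (c i)) ∣ ∏ _i : Fin d, (X ^ 2 - C (1 : ℂ)) := by
      refine Finset.prod_dvd_prod_of_dvd _ _ fun i _ => ?_
      rw [Polynomial.dvd_iff_isRoot]
      simp [h2 i]
    refine this.trans ?_
    simp only [Finset.prod_const, Finset.card_univ, Fintype.card_fin]
    exact pow_dvd_pow _ (Nat.le_succ d)
  have h3 := (hsq.dvd_pow_iff_dvd (Nat.succ_ne_zero d)).1 hdvd
  have h4 := (minpoly.dvd_iff).1 h3
  simpa [sub_eq_zero] using h4

theorem eig_pow {V : Type*} [AddCommGroup V] [Module ℂ V] [FiniteDimensional ℂ V]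
    (f : Module.End ℂ V) (n : ℕ) (hf : f ^ n = 1) {d : ℕ} (c : Fin d → ℂ)
    (hc : LinearMap.charpoly f = ∏ i, (X - C (c i))) (i : Fin d) : c i ^ n = 1 := by
  have h1 : f.HasEigenvalue (c i) := by
    rw [Module.End.hasEigenvalue_iff_isRoot_charpoly, hc, Polynomial.IsRoot.def,
      Polynomial.eval_prod]
    exact Finset.prod_eq_zero (Finset.mem_univ i) (by simp)
  obtain ⟨v, hv⟩ := h1.exists_hasEigenvector
  have h2 := hv.pow_apply n
  rw [hf] at h2
  have h3 : (c i ^ n - 1) • v = 0 := by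
    rw [sub_smul, ← h2]; simp
  rcases smul_eq_zero.1 h3 with h | h
  · exact sub_eq_zero.1 h
  · exact absurd h hv.2

section Combin

variable {h : ℕ}

/-- The age of the symmetric square. -/
noncomputable def symAge (a : Fin h → ℝ) : ℝ :=
  ∑ p ∈ Finset.univ.filter (fun p : Fin h × Fin h => p.1 ≤ p.2), Int.fract (a p.1 + a p.2)

theorem two_symAge (a : Fin h → ℝ) :
    2 * symAge a = ∑ i, ∑ j, Int.fract (a i + a j) + ∑ i, Int.fract (a i + a i) := by
  have e1 : symAge a = ∑ i, ∑ j, if i ≤ j then Int.fract (a i + a j) else 0 := by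
    rw [symAge, Finset.sum_filter, Fintype.sum_prod_type]
  have e2 : symAge a = ∑ i, ∑ j, if j ≤ i then Int.fract (a i + a j) else 0 := by
    rw [e1, Finset.sum_comm]
    simp only [add_comm]
  have e3 : ∑ i, Int.fract (a i + a i) = ∑ i, ∑ j, if i = j then Int.fract (a i + a j) else 0 := by
    simp
  rw [two_mul]
  nth_rewrite 1 [e1]
  rw [e2, e3, ← Finset.sum_add_distrib, ← Finset.sum_add_distrib]
  refine Finset.sum_congr rfl fun i _ => ?_
  rw [← Finset.sum_add_distrib, ← Finset.sum_add_distrib]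
  refine Finset.sum_congr rfl fun j _ => ?_
  rcases lt_trichotomy i j with hij | hij | hij
  · simp [hij.le, hij.not_ge, hij.ne]
  · simp [hij]
  · simp [hij.le, hij.not_ge, hij.ne']

theorem two_symAge_ge (a : Fin h → ℝ) (s : Finset (Fin h)) :
    ∑ i ∈ s, ∑ j ∈ s, Int.fract (a i + a j) + ∑ i ∈ s, Int.fract (a i + a i) ≤ 2 * symAge a := by
  rw [two_symAge]
  have hnn : ∀ x : ℝ, 0 ≤ Int.fract x := Int.fract_nonneg
  refine add_le_add ?_ ?_
  · refine (Finset.sum_le_sum fun i _ => ?_).trans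
      (Finset.sum_le_sum_of_subset_of_nonneg (Finset.subset_univ s)
        fun i _ _ => Finset.sum_nonneg fun j _ => hnn _)
    exact Finset.sum_le_sum_of_subset_of_nonneg (Finset.subset_univ s) fun j _ _ => hnn _
  · exact Finset.sum_le_sum_of_subset_of_nonneg (Finset.subset_univ s) fun j _ _ => hnn _

theorem symAge_ge_row (a : Fin h → ℝ) (i₀ : Fin h) :
    Int.fract (a i₀ + a i₀) +
      ∑ j ∈ Finset.univ.erase i₀, (Int.fract (a i₀ + a j) + Int.fract (a j + a j)) ≤ symAge a := by
  have hnn : ∀ x : ℝ, 0 ≤ Int.fract x := Int.fract_nonneg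
  have h1 := two_symAge a
  rw [← Finset.add_sum_erase _ _ (Finset.mem_univ i₀),
    ← Finset.add_sum_erase _ _ (Finset.mem_univ i₀),
    ← Finset.add_sum_erase _ _ (Finset.mem_univ i₀)] at h1
  have h2 : ∑ j ∈ Finset.univ.erase i₀, (Int.fract (a i₀ + a j) + Int.fract (a j + a j)) ≤
      ∑ i ∈ Finset.univ.erase i₀, ∑ j, Int.fract (a i + a j) := by
    refine Finset.sum_le_sum fun i hi => ?_
    have hne : i₀ ≠ i := (Finset.ne_of_mem_erase hi).symm
    have := Finset.sum_le_sum_of_subset_of_nonneg (f := fun j => Int.fract (a i + a j))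
      (Finset.subset_univ {i₀, i}) fun j _ _ => hnn _
    rw [Finset.sum_pair hne] at this
    simpa [add_comm] using this
  rw [Finset.sum_add_distrib] at h2 ⊢
  linarith

theorem fract_scaled {N : ℕ} {x y : ℝ} {p q : ℤ} (hx : x = p / N) (hy : y = q / N) :
    Int.fract (x + y) = ((p + q) % (N : ℤ) : ℤ) / N := by
  rw [hx, hy, ← add_div, ← Int.cast_add, Int.fract_div_intCast_eq_div_intCast_mod]

theorem symAge_two {N : ℕ} (hN : 0 < N) (a : Fin h → ℝ) {i j : Fin h} {p q : ℤ}
    (hi : a i = p / N) (hj : a j = q / N) (hne : i ≠ j)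
    (hle : (N : ℤ) ≤ (p + p) % N + (q + q) % N + (p + q) % N) : 1 ≤ symAge a := by
  have h1 := two_symAge_ge a {i, j}
  simp only [Finset.sum_pair hne] at h1
  rw [fract_scaled hi hi, fract_scaled hi hj, fract_scaled hj hj, fract_scaled hj hi,
    add_comm q p] at h1
  have hN' : (0 : ℝ) < N := by exact_mod_cast hN
  have h2 : (N : ℝ) ≤ ((p + p) % N : ℤ) + ((q + q) % N : ℤ) + ((p + q) % N : ℤ) := by
    exact_mod_cast hle
  have h3 : (1 : ℝ) ≤ ((p + p) % N : ℤ) / N + ((q + q) % N : ℤ) / N + ((p + q) % N : ℤ) / N := by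
    rw [← add_div, ← add_div, le_div_iff₀ hN']
    linarith
  linarith

theorem symAge_three {N : ℕ} (hN : 0 < N) (a : Fin h → ℝ) {i j k : Fin h} {p q t : ℤ}
    (hi : a i = p / N) (hj : a j = q / N) (hk : a k = t / N) (hne : i ≠ j) (hik : i ≠ k)
    (hjk : j ≠ k)
    (hle : (N : ℤ) ≤ (p + p) % N + (q + q) % N + (p + q) % N + (t + t) % N + (p + t) % N
      + (q + t) % N) : 1 ≤ symAge a := by
  have h1 := two_symAge_ge a {i, j, k}
  have hi' : i ∉ ({j, k} : Finset (Fin h)) := by simp [hne, hik]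
  simp only [Finset.sum_insert hi', Finset.sum_pair hjk] at h1
  rw [fract_scaled hi hi, fract_scaled hi hj, fract_scaled hj hj, fract_scaled hj hi,
    fract_scaled hk hi, fract_scaled hi hk, fract_scaled hj hk, fract_scaled hk hj,
    fract_scaled hk hk,
    add_comm q p, add_comm t p, add_comm t q] at h1
  have hN' : (0 : ℝ) < N := by exact_mod_cast hN
  have h2 : (N : ℝ) ≤ ((p + p) % N : ℤ) + ((q + q) % N : ℤ) + ((p + q) % N : ℤ)
      + ((t + t) % N : ℤ) + ((p + t) % N : ℤ) + ((q + t) % N : ℤ) := by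
    exact_mod_cast hle
  have h3 : (1 : ℝ) ≤ ((p + p) % N : ℤ) / N + ((q + q) % N : ℤ) / N + ((p + q) % N : ℤ) / N
      + ((t + t) % N : ℤ) / N + ((p + t) % N : ℤ) / N + ((q + t) % N : ℤ) / N := by
    rw [← add_div, ← add_div, ← add_div, ← add_div, ← add_div, le_div_iff₀ hN']
    linarith
  linarith

theorem em0 {N p : ℤ} (h0 : 0 ≤ p) (h1 : p < N) : p % N = p := Int.emod_eq_of_lt h0 h1

theorem em1 {N p : ℤ} (h0 : N ≤ p) (h1 : p < N + N) : p % N = p - N := by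
  rw [← Int.sub_emod_right]
  exact Int.emod_eq_of_lt (by omega) (by omega)


/-- Existence of suitable auxiliary units. -/
theorem exists_units (N : ℕ) (hN : 5 ≤ N) (h6 : N ≠ 6) :
    ∃ u : ℕ, u.Coprime N ∧ 1 < u ∧ 2 * u < N ∧ N ≤ 2 * u + 4 ∧
      (3 * u ≤ N + 3 ∨ ∃ v : ℕ, v.Coprime N ∧ 1 < v ∧ v < u) := by
  have hodd : ∀ M : ℕ, M % 2 = 1 → Nat.Coprime 2 M := fun M hM =>
    Nat.coprime_two_left.2 (Nat.odd_iff.2 hM)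
  have hdvd : ∀ a b c : ℕ, Nat.Coprime c b → (∀ d, d ∣ a → d ∣ b → d ∣ c) → Nat.Coprime a b := by
    intro a b c hc H
    have h1 := H _ (Nat.gcd_dvd_left a b) (Nat.gcd_dvd_right a b)
    have h2 : Nat.gcd a b ∣ Nat.gcd c b := Nat.dvd_gcd h1 (Nat.gcd_dvd_right a b)
    rw [hc] at h2
    exact Nat.dvd_one.1 h2
  rcases Nat.even_or_odd' N with ⟨M, rfl | rfl⟩
  · rcases Nat.even_or_odd' M with ⟨k, rfl | rfl⟩
    · have key : ∀ c : ℕ, c % 2 = 1 → Nat.Coprime c k → Nat.Coprime c (2 * (2 * k)) := by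
        intro c hc hk
        have := (hodd c hc).symm
        exact Nat.Coprime.mul_right this (Nat.Coprime.mul_right this hk)
      refine ⟨2 * k - 1, ?_, by omega, by omega, by omega, ?_⟩
      · refine key _ (by omega) (hdvd _ _ 1 (Nat.coprime_one_left k) fun d h1 h2 => ?_)
        have := Nat.dvd_sub (h2.mul_left 2) h1
        rwa [show 2 * k - (2 * k - 1) = 1 by omega] at this
      · by_cases hk : k ≤ 3
        · left; omega
        · right
          rcases Nat.mod_two_eq_zero_or_one k with h0 | h0
          · refine ⟨k + 1, key _ (by omega) (by simp), by omega, by omega⟩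
          · refine ⟨k + 2, key _ (by omega) ?_, by omega, by omega⟩
            simpa using hodd k h0
    · have key : ∀ c : ℕ, c % 2 = 1 → Nat.Coprime c (2 * k + 1) →
          Nat.Coprime c (2 * (2 * k + 1)) := by
        intro c hc hk
        exact Nat.Coprime.mul_right (hodd c hc).symm hk
      refine ⟨2 * k - 1, ?_, by omega, by omega, by omega, ?_⟩
      · refine key _ (by omega) (hdvd _ _ 2 (hodd _ (by omega)) fun d h1 h2 => ?_)
        have := Nat.dvd_sub h2 h1
        rwa [show 2 * k + 1 - (2 * k - 1) = 2 by omega] at this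
      · by_cases hk : k ≤ 4
        · left; omega
        · right
          refine ⟨2 * k - 3, ?_, by omega, by omega⟩
          refine key _ (by omega) (hdvd _ _ 4 ?_ fun d h1 h2 => ?_)
          · exact Nat.Coprime.mul_left (hodd _ (by omega)) (hodd _ (by omega))
          · have := Nat.dvd_sub h2 h1
            rwa [show 2 * k + 1 - (2 * k - 3) = 4 by omega] at this
  · refine ⟨M, ?_, by omega, by omega, by omega, ?_⟩
    · simp
    · by_cases hk : M ≤ 2
      · left; omega
      · right
        exact ⟨2, hodd _ (by omega), by omega, by omega⟩

theorem idx_ne {N : ℕ} (hN : 0 < N) (a : Fin h → ℝ) {i j : Fin h} {p q : ℤ}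
    (hi : a i = p / N) (hj : a j = q / N) (hpq : p ≠ q) : i ≠ j := by
  rintro rfl
  have hN' : (N : ℝ) ≠ 0 := by exact_mod_cast hN.ne'
  rw [hi, div_left_inj' hN'] at hj
  exact hpq (by exact_mod_cast hj)

/-- The key estimate for orders `N` with `φ(N) ≥ 4`. -/
theorem symAge_ge_one (a : Fin h → ℝ) (N : ℕ) (hN : 5 ≤ N) (h6 : N ≠ 6)
    (hu : ∀ v : ℕ, v.Coprime N → v < N →
      ∃ i, ∃ p : ℤ, a i = p / N ∧ (p = v ∨ p = N - v)) :
    1 ≤ symAge a := by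
  have hN0 : 0 < N := by omega
  obtain ⟨u, hcu, hu1, hu2, hu3, hv⟩ := exists_units N hN h6
  obtain ⟨i, p, hi, hp⟩ := hu 1 (Nat.coprime_one_left N) (by omega)
  obtain ⟨j, q, hj, hq⟩ := hu u hcu (by omega)
  have hij : i ≠ j := idx_ne hN0 a hi hj (by omega)
  rcases hp with hp | hp
  · rcases hq with hq | hq
    · refine symAge_two hN0 a hi hj hij ?_
      rw [em0 (p := p + p) (by omega) (by omega), em0 (p := q + q) (by omega) (by omega),
        em0 (p := p + q) (by omega) (by omega)]
      omega
    · rcases hv with hv | ⟨v, hcv, hv1, hv2⟩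
      · refine symAge_two hN0 a hi hj hij ?_
        rw [em0 (p := p + p) (by omega) (by omega), em1 (p := q + q) (by omega) (by omega),
          em0 (p := p + q) (by omega) (by omega)]
        omega
      · obtain ⟨k, t, hk, ht⟩ := hu v hcv (by omega)
        have hik : i ≠ k := idx_ne hN0 a hi hk (by omega)
        have hjk : j ≠ k := idx_ne hN0 a hj hk (by omega)
        refine symAge_three hN0 a hi hj hk hij hik hjk ?_
        rw [em0 (p := p + p) (by omega) (by omega), em1 (p := q + q) (by omega) (by omega),
          em0 (p := p + q) (by omega) (by omega)]
        rcases ht with ht | ht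
        · rw [em0 (p := t + t) (by omega) (by omega), em0 (p := p + t) (by omega) (by omega),
            em0 (p := q + t) (by omega) (by omega)]
          omega
        · rw [em1 (p := t + t) (by omega) (by omega), em0 (p := p + t) (by omega) (by omega),
            em1 (p := q + t) (by omega) (by omega)]
          omega
  · refine symAge_two hN0 a hi hj hij ?_
    rw [em1 (p := p + p) (by omega) (by omega), em1 (p := p + q) (by omega) (by omega)]
    rcases hq with hq | hq
    · rw [em0 (p := q + q) (by omega) (by omega)]
      omega
    · rw [em1 (p := q + q) (by omega) (by omega)]
      omega

theorem row_bound {x y : ℝ} {p q : ℤ} (hx : x = p / (12 : ℕ)) (hy : y = q / (12 : ℕ))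
    (hp : p = 4 ∨ p = 8 ∨ p = 3 ∨ p = 9 ∨ p = 2 ∨ p = 10)
    (hq : q = 0 ∨ q = 6 ∨ q = 4 ∨ q = 8 ∨ q = 3 ∨ q = 9 ∨ q = 2 ∨ q = 10) :
    1 / 6 ≤ Int.fract (x + y) + Int.fract (y + y) := by
  rw [fract_scaled hx hy, fract_scaled hy hy]
  have h1 : (2 : ℤ) ≤ (p + q) % 12 + (q + q) % 12 := by omega
  have h2 : (2 : ℝ) ≤ ((p + q) % 12 : ℤ) + ((q + q) % 12 : ℤ) := by exact_mod_cast h1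
  push_cast at h2 ⊢
  linarith

theorem diag_bound {x : ℝ} {p : ℤ} (hx : x = p / (12 : ℕ))
    (hp : p = 4 ∨ p = 8 ∨ p = 3 ∨ p = 9 ∨ p = 2 ∨ p = 10) :
    1 / 3 ≤ Int.fract (x + x) := by
  rw [fract_scaled hx hx]
  have h1 : (4 : ℤ) ≤ (p + p) % 12 := by omega
  have h2 : (4 : ℝ) ≤ ((p + p) % 12 : ℤ) := by exact_mod_cast h1
  push_cast at h2 ⊢
  linarith

end Combin

theorem root_values {h : ℕ} (a : Fin h → ℝ) (ha : ∀ i, a i ∈ Set.Ico (0 : ℝ) 1)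
    (q : Polynomial ℤ) (hq : q.map (Int.castRingHom ℂ) =
      ∏ i, (X - C (ee (a i))) * (X - C (starRingEnd ℂ (ee (a i)))))
    (i₀ : Fin h) (N : ℕ) (hN : 1 < N) (hprim : IsPrimitiveRoot (ee (a i₀)) N) :
    ∀ v : ℕ, v.Coprime N → v < N → ∃ i, ∃ p : ℤ, a i = p / N ∧ (p = v ∨ p = N - v) := by
  intro v hv hvN
  have hN0 : 0 < N := by omega
  have hNr : (0 : ℝ) < N := by exact_mod_cast hN0
  have hz := Complex.isPrimitiveRoot_exp_of_coprime v N hN0.ne' hv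
  have hz' : Complex.exp (2 * Real.pi * Complex.I * (v / N)) = ee ((v : ℝ) / N) := by
    rw [ee]; push_cast; rfl
  rw [hz'] at hz
  have h0 : Polynomial.aeval (ee (a i₀)) q = 0 := by
    rw [Polynomial.aeval_def, ← Polynomial.eval_map]
    change Polynomial.eval _ (q.map (Int.castRingHom ℂ)) = 0
    rw [hq, Polynomial.eval_prod]
    exact Finset.prod_eq_zero (Finset.mem_univ i₀) (by simp)
  have h1 : minpoly ℤ (ee (a i₀)) ∣ q :=
    minpoly.isIntegrallyClosed_dvd (hprim.isIntegral hN0) h0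
  rw [← Polynomial.cyclotomic_eq_minpoly hprim hN0, Polynomial.cyclotomic_eq_minpoly hz hN0] at h1
  have h2 : Polynomial.aeval (ee ((v : ℝ) / N)) q = 0 := by
    obtain ⟨w, rfl⟩ := h1
    simp [minpoly.aeval]
  rw [Polynomial.aeval_def, ← Polynomial.eval_map] at h2
  change Polynomial.eval _ (q.map (Int.castRingHom ℂ)) = 0 at h2
  rw [hq, Polynomial.eval_prod, Finset.prod_eq_zero_iff] at h2
  obtain ⟨i, -, hi⟩ := h2
  have hv0 : 0 < v := by
    rcases Nat.eq_zero_or_pos v with rfl | h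
    · simp at hv; omega
    · exact h
  have hvr : (0 : ℝ) < v := by exact_mod_cast hv0
  have hvNr : (v : ℝ) < N := by exact_mod_cast hvN
  refine ⟨i, ?_⟩
  rw [Polynomial.eval_mul, mul_eq_zero] at hi
  simp only [Polynomial.eval_sub, Polynomial.eval_X, Polynomial.eval_C, sub_eq_zero] at hi
  rcases hi with hi | hi
  · refine ⟨v, ?_, Or.inl rfl⟩
    have := ee_inj ⟨by positivity, (div_lt_one hNr).2 hvNr⟩ (ha i) hi
    rw [← this]; simp
  · refine ⟨N - v, ?_, Or.inr rfl⟩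
    have h3 : ee (a i) = ee (((N : ℝ) - v) / N) := by
      have := congrArg (starRingEnd ℂ) hi
      rw [Complex.conj_conj, ee_conj] at this
      rw [← this, ee_eq_iff]
      refine ⟨-1, ?_⟩
      push_cast
      field_simp
      ring
    have := ee_inj (ha i) ⟨div_nonneg (by linarith) hNr.le, (div_lt_one hNr).2 (by linarith)⟩ h3
    rw [this]; simp

theorem sum_B_ge {r : ℕ} (x : ℝ) (b : Fin r → ℝ)
    (hs : ∑ k, Int.fract (x + b k) = ∑ k, Int.fract (x - b k)) (hx : 1 / 3 ≤ Int.fract (x + x)) :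
    (r : ℝ) / 6 ≤ ∑ k, Int.fract (x + b k) := by
  have h1 : ∑ _k : Fin r, (1 / 3 : ℝ) ≤ ∑ k, (Int.fract (x + b k) + Int.fract (x - b k)) := by
    refine Finset.sum_le_sum fun k _ => hx.trans ?_
    have := Int.fract_add_le (x + b k) (x - b k)
    rwa [show x + b k + (x - b k) = x + x by ring] at this
  rw [Finset.sum_add_distrib, ← hs] at h1
  simp at h1
  linarith

/-- If `2x` is an integer and some `2 b k` is not, the symmetric sum is at least one. -/
theorem sum_B_half {r : ℕ} (P : Polynomial ℤ) (b : Fin r → ℝ)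
    (hP : P.map (Int.castRingHom ℂ) = ∏ k, (X - C (ee (b k)))) (x : ℝ)
    (hx : ∃ n : ℤ, 2 * x = n) (k₀ : Fin r) (hk : ¬ ∃ n : ℤ, 2 * b k₀ = n) :
    1 ≤ ∑ k, Int.fract (x + b k) := by
  have h1 := congrArg (Polynomial.eval (ee (-(b k₀)))) (prod_symm P b hP)
  have h2 : Polynomial.eval (ee (-(b k₀))) (∏ k, (X - C (ee (-(b k))))) = 0 := by
    rw [Polynomial.eval_prod]
    exact Finset.prod_eq_zero (Finset.mem_univ k₀) (by simp)
  rw [h2, Polynomial.eval_prod, Finset.prod_eq_zero_iff] at h1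
  obtain ⟨k, -, hk1⟩ := h1
  simp only [Polynomial.eval_sub, Polynomial.eval_X, Polynomial.eval_C, sub_eq_zero] at hk1
  obtain ⟨n, hn⟩ := ee_eq_iff.1 hk1
  obtain ⟨l, hl⟩ := hx
  have hne : k₀ ≠ k := by
    rintro rfl
    exact hk ⟨-n, by push_cast; linarith⟩
  have h3 := Finset.sum_le_sum_of_subset_of_nonneg (f := fun k => Int.fract (x + b k))
      (Finset.subset_univ {k₀, k}) fun j _ _ => Int.fract_nonneg _
  rw [Finset.sum_pair hne] at h3
  have h4 : x + b k = -(x + b k₀) + ((l - n : ℤ) : ℝ) := by push_cast; linarith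
  have h5 : Int.fract (x + b k₀) ≠ 0 := by
    intro h0
    obtain ⟨z, hz⟩ := Int.fract_eq_zero_iff.1 h0
    exact hk ⟨2 * z - l, by push_cast; linarith⟩
  rw [h4, Int.fract_add_intCast, Int.fract_neg h5] at h3
  linarith

theorem small_values {x : ℝ} (hx : x ∈ Set.Ico (0 : ℝ) 1) (N : ℕ) (hN : 0 < N)
    (hprim : IsPrimitiveRoot (ee x) N) (hsmall : N < 5 ∨ N = 6) :
    ∃ q : ℤ, x = q / (12 : ℕ) ∧
      (q = 0 ∨ q = 6 ∨ q = 4 ∨ q = 8 ∨ q = 3 ∨ q = 9 ∨ q = 2 ∨ q = 10) := by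
  obtain ⟨v, hvN, hc, hv⟩ := (Complex.isPrimitiveRoot_iff _ _ hN.ne').1 hprim
  have hNr : (0 : ℝ) < N := by exact_mod_cast hN
  have hvNr : (v : ℝ) < N := by exact_mod_cast hvN
  have hv' : ee ((v : ℝ) / N) = ee x := by
    rw [← hv, ee]; push_cast; rfl
  have hxv := ee_inj ⟨by positivity, (div_lt_one hNr).2 hvNr⟩ hx hv'
  rw [← hxv]
  have hN6 : N ≤ 6 := by omega
  interval_cases N <;> first | omega | skip
  all_goals interval_cases v
  all_goals first | (exfalso; revert hc; decide) | skip
  · exact ⟨0, by norm_num, by norm_num⟩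
  · exact ⟨6, by norm_num, by norm_num⟩
  · exact ⟨4, by norm_num, by norm_num⟩
  · exact ⟨8, by norm_num, by norm_num⟩
  · exact ⟨3, by norm_num, by norm_num⟩
  · exact ⟨9, by norm_num, by norm_num⟩
  · exact ⟨2, by norm_num, by norm_num⟩
  · exact ⟨10, by norm_num, by norm_num⟩


/-- Let `h ≥ 1`, `r ≥ 0`, `g = h + r ≥ 5`.  Let `A` be a finite-order automorphism of an
`h`-dimensional complex vector space `W` whose eigenvalues `αᵢ = e^{2πi aᵢ}` (`aᵢ ∈ [0,1)`)
satisfy the integrality condition, and let `B ∈ GL(r,ℤ)` be of finite order, with complex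
eigenvalues `βₖ = e^{2πi bₖ}` (`bₖ ∈ [0,1)`).  Let `s` be the induced automorphism of
`V = Sym²W ⊕ (W ⊗ ℂʳ)`, acting as `Sym²A` on the first summand and as `A ⊗ B` on the
second.  If `s² ≠ id_V`, then
`λ_V(s) = Σ_{i ≤ j} {aᵢ + aⱼ} + Σ_{i,k} {aᵢ + bₖ} ≥ 1`. -/
theorem age_ge_one_of_not_order_two
    (h r : ℕ) (hh : 1 ≤ h) (hg : 5 ≤ h + r)
    (W : Type*) [AddCommGroup W] [Module ℂ W] [FiniteDimensional ℂ W]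
    (hW : Module.finrank ℂ W = h)
    (A : Module.End ℂ W) (n : ℕ) (hn : 0 < n) (hA : A ^ n = 1)
    (a : Fin h → ℝ) (ha : ∀ i, a i ∈ Set.Ico (0 : ℝ) 1)
    (heigA : LinearMap.charpoly A =
      ∏ i, (X - C (Complex.exp (2 * Real.pi * Complex.I * (a i)))))
    (hint : ∃ q : Polynomial ℤ, q.map (Int.castRingHom ℂ) =
      ∏ i, (X - C (Complex.exp (2 * Real.pi * Complex.I * (a i)))) *
        (X - C (starRingEnd ℂ (Complex.exp (2 * Real.pi * Complex.I * (a i))))))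
    (B : Matrix (Fin r) (Fin r) ℤ) (m : ℕ) (hm : 0 < m) (hB : B ^ m = 1)
    (b : Fin r → ℝ) (hb : ∀ k, b k ∈ Set.Ico (0 : ℝ) 1)
    (heigB : (B.map (Int.cast : ℤ → ℂ)).charpoly =
      ∏ k, (X - C (Complex.exp (2 * Real.pi * Complex.I * (b k)))))
    -- `s` is the induced endomorphism of `V = Sym²W ⊕ (W ⊗ ℂʳ)`:
    (s : (SymSq ℂ W × TensorProduct ℂ W (Fin r → ℂ)) →ₗ[ℂ]
      (SymSq ℂ W × TensorProduct ℂ W (Fin r → ℂ)))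
    (hs : s = LinearMap.prodMap (sym2Map A)
      (TensorProduct.map A (Matrix.toLin' (B.map (Int.cast : ℤ → ℂ)))))
    (hs2 : s ∘ₗ s ≠ LinearMap.id) :
    1 ≤ (∑ p ∈ Finset.univ.filter (fun p : Fin h × Fin h => p.1 ≤ p.2),
          Int.fract (a p.1 + a p.2)) +
        ∑ i : Fin h, ∑ k : Fin r, Int.fract (a i + b k) := by
  obtain ⟨q, hq⟩ := hint
  have hcast : (B.map (Int.cast : ℤ → ℂ)) = B.map (Int.castRingHom ℂ) := rfl
  have hP : B.charpoly.map (Int.castRingHom ℂ) = ∏ k, (X - C (ee (b k))) := by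
    rw [← Matrix.charpoly_map, ← hcast, heigB]
  have hrootA : ∀ i, ee (a i) ^ n = 1 := eig_pow A n hA (fun i => ee (a i)) heigA
  have hprim : ∀ i, ∃ N : ℕ, 0 < N ∧ IsPrimitiveRoot (ee (a i)) N := fun i =>
    ⟨orderOf (ee (a i)), orderOf_pos_iff.2 (isOfFinOrder_iff_pow_eq_one.2 ⟨n, hn, hrootA i⟩),
      IsPrimitiveRoot.orderOf _⟩
  choose N hN0 hNprim using hprim
  change 1 ≤ symAge a + ∑ i : Fin h, ∑ k : Fin r, Int.fract (a i + b k)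
  have hnn : ∀ i, 0 ≤ ∑ k : Fin r, Int.fract (a i + b k) := fun i =>
    Finset.sum_nonneg fun k _ => Int.fract_nonneg _
  have hBnn : 0 ≤ ∑ i : Fin h, ∑ k : Fin r, Int.fract (a i + b k) :=
    Finset.sum_nonneg fun i _ => hnn i
  have hrow : ∀ i, ∑ k : Fin r, Int.fract (a i + b k) ≤
      ∑ i : Fin h, ∑ k : Fin r, Int.fract (a i + b k) := fun i =>
    Finset.single_le_sum (f := fun i => ∑ k : Fin r, Int.fract (a i + b k))
      (fun i _ => hnn i) (Finset.mem_univ i)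
  have hAnn : 0 ≤ symAge a := Finset.sum_nonneg fun p _ => Int.fract_nonneg _
  have hhalf : ∀ x : ℝ, ee x ^ 2 = 1 ↔ ∃ n : ℤ, 2 * x = n := by
    intro x
    rw [ee_sq, ← ee_zero, ee_eq_iff]
    simp
  by_cases hbig : ∃ i, 5 ≤ N i ∧ N i ≠ 6
  · obtain ⟨i, hi5, hi6⟩ := hbig
    have := symAge_ge_one a (N i) hi5 hi6
      (root_values a ha q hq i (N i) (by omega) (hNprim i))
    linarith
  have hsm : ∀ i, ∃ q : ℤ, a i = q / (12 : ℕ) ∧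
      (q = 0 ∨ q = 6 ∨ q = 4 ∨ q = 8 ∨ q = 3 ∨ q = 9 ∨ q = 2 ∨ q = 10) := by
    intro i
    refine small_values (ha i) (N i) (hN0 i) (hNprim i) ?_
    by_contra hcon
    exact hbig ⟨i, by omega, by omega⟩
  choose w hw hwv using hsm
  by_cases hall : ∀ i, w i = 0 ∨ w i = 6
  · have hA2 : ∀ i, ∃ n : ℤ, 2 * a i = n := by
      intro i
      rcases hall i with h0 | h0
      · exact ⟨0, by rw [hw, h0]; norm_num⟩
      · exact ⟨1, by rw [hw, h0]; norm_num⟩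
    by_cases hBall : ∀ k, ∃ n : ℤ, 2 * b k = n
    · exfalso
      have hAsq : A ^ 2 = 1 := end_sq_eq_one A n hn hA (fun i => ee (a i)) heigA
        fun i => (hhalf _).2 (hA2 i)
      set f : Module.End ℂ (Fin r → ℂ) := Matrix.toLin' (B.map (Int.cast : ℤ → ℂ)) with hf
      have hfm : f ^ m = 1 := by
        rw [hf, ← Matrix.toLin'_pow, hcast]
        have : (B.map (Int.castRingHom ℂ)) ^ m = 1 := by
          rw [← RingHom.mapMatrix_apply, ← map_pow, hB, map_one]
        rw [this, Matrix.toLin'_one]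
        rfl
      have hfsq : f ^ 2 = 1 := end_sq_eq_one f m hm hfm (fun k => ee (b k))
        (by rw [hf, Matrix.charpoly_toLin', heigB])
        fun k => (hhalf _).2 (hBall k)
      have hA' : ∀ w, A (A w) = w := fun w => by
        have := congrArg (fun g : Module.End ℂ W => g w) hAsq
        simpa [pow_two] using this
      have hf' : ∀ w, f (f w) = w := fun w => by
        have := congrArg (fun g : Module.End ℂ (Fin r → ℂ) => g w) hfsq
        simpa [pow_two] using this
      have hAc : A ∘ₗ A = LinearMap.id := LinearMap.ext hA'
      have hfc : f ∘ₗ f = LinearMap.id := LinearMap.ext hf'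
      apply hs2
      refine LinearMap.ext fun x => ?_
      obtain ⟨x, y⟩ := x
      rw [hs]
      simp only [LinearMap.comp_apply, LinearMap.prodMap_apply, LinearMap.id_apply, Prod.mk.injEq]
      constructor
      · obtain ⟨x, rfl⟩ := Submodule.Quotient.mk_surjective _ x
        simp only [sym2Map, Submodule.mapQ_apply]
        rw [← LinearMap.comp_apply, ← TensorProduct.map_comp, hAc, TensorProduct.map_id]
        rfl
      · rw [← LinearMap.comp_apply, ← TensorProduct.map_comp, hAc, hfc, TensorProduct.map_id]
        rfl
    · push Not at hBall
      obtain ⟨k₀, hk₀⟩ := hBall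
      have := sum_B_half B.charpoly b hP (a ⟨0, hh⟩) (hA2 _) k₀ (by push Not; exact hk₀)
      linarith [hrow ⟨0, hh⟩]
  · push Not at hall
    obtain ⟨i₀, hi1, hi2⟩ := hall
    have hp : w i₀ = 4 ∨ w i₀ = 8 ∨ w i₀ = 3 ∨ w i₀ = 9 ∨ w i₀ = 2 ∨ w i₀ = 10 := by
      have := hwv i₀
      omega
    have h1 := symAge_ge_row a i₀
    have h2 := diag_bound (hw i₀) hp
    have h3 := sum_B_ge (a i₀) b (sum_fract_symm B.charpoly b hP (a i₀)) h2
    have h4 : ∑ j ∈ Finset.univ.erase i₀, (1 / 6 : ℝ) ≤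
        ∑ j ∈ Finset.univ.erase i₀, (Int.fract (a i₀ + a j) + Int.fract (a j + a j)) :=
      Finset.sum_le_sum fun j _ => row_bound (hw i₀) (hw j) hp (hwv j)
    rw [Finset.sum_const, Finset.card_erase_of_mem (Finset.mem_univ i₀), Finset.card_univ,
      Fintype.card_fin, nsmul_eq_mul, Nat.cast_sub hh] at h4
    have h5 : (5 : ℝ) ≤ h + r := by exact_mod_cast hg
    push_cast at h4
    linarith [hrow i₀]
end
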